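/- (Theorem 5, constructive control with multiple candidates) Let k ∈ ℕ and suppose S ⊆ V with |S| ≤ k satisfies Σ_{y ⊆ E} w(y)·f(S, y, A) ≥ (1 − 1/e) · Σ_{y ⊆ E} w(y)·f(S', y, A) for every S' ⊆ V with |S'| ≤ k (as the greedy algorithm MOVConstructive guarantees for the expected number of influenced voters in A). Then MOV_C(S) ≥ (1/3)·(1 − 1/e) · MOV_C(S') for every S' ⊆ V with |S'| ≤ k. -/

import Mathlib

/-!
In every scenario `y` the margin change is comparable with the number of influenced voters in `A`:
`f(S, y, A) ≤ m_C(S, y) ≤ 2 f(S, y, A)`. The lower bound holds because every term of the minimum is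
nonnegative; the upper bound follows by evaluating the minimum at a candidate `c` maximizing
`|B_c|`, where the term is `f(S, y, A ∩ B_c) ≤ f(S, y, A)`. Averaging over scenarios and combining
with the greedy guarantee gives the factor `(1/2)(1 - 1/e)`, which is stronger than
`(1/3)(1 - 1/e)`.
-/

open Finset

attribute [local instance] Classical.propDecidable

/-- Number of nodes of `A` reachable from seed set `S` in scenario `y`. -/
noncomputable def reachCount {V : Type*} (y : Finset (V × V)) (S A : Finset V) : ℕ :=
  (A.filter (fun v => ∃ s ∈ S, Relation.ReflTransGen (fun a b => (a, b) ∈ y) s v)).card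

/-- Probability of the live-graph scenario `y ⊆ E` under edge probabilities `p`. -/
noncomputable def sceneWeight {V : Type*} (E : Finset (V × V)) (p : V × V → ℝ)
    (y : Finset (V × V)) : ℝ :=
  (∏ e ∈ y, p e) * (∏ e ∈ E \ y, (1 - p e))

/-- Voters whose second choice is `c`. -/
noncomputable def secondFor {V C : Type*} [Fintype V] (π₂ : V → C) (c : C) : Finset V :=
  Finset.univ.filter (fun v => π₂ v = c)

/-- Voters whose first choice is `c`. -/
noncomputable def firstFor {V C : Type*} [Fintype V] (π₁ : V → C) (c : C) : Finset V :=
  Finset.univ.filter (fun v => π₁ v = c)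

/-- Constructive change in margin in scenario `y` under seed set `S`:
`m_C(S, y) = f(S, y, A) + min_{c ∈ J} ( f(S, y, A ∩ B_c) + max_{c' ∈ J} |B_{c'}| − |B_c| )`,
where `A = {v : π₂ v = c*}` and `B_c = {v : π₁ v = c}`. -/
noncomputable def mC {V C : Type*} [Fintype V] (J : Finset C) (hJ : J.Nonempty)
    (π₁ π₂ : V → C) (cstar : C) (S : Finset V) (y : Finset (V × V)) : ℝ :=
  (reachCount y S (secondFor π₂ cstar) : ℝ) +
    J.inf' hJ (fun c =>
      (reachCount y S (secondFor π₂ cstar ∩ firstFor π₁ c) : ℝ) +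
        J.sup' hJ (fun c' => ((firstFor π₁ c').card : ℝ)) - ((firstFor π₁ c).card : ℝ))

/-- Expected constructive change in margin `MOV_C(S) = Σ_{y ⊆ E} w(y)·m_C(S, y)`. -/
noncomputable def MOVC {V C : Type*} [Fintype V] (E : Finset (V × V)) (p : V × V → ℝ)
    (J : Finset C) (hJ : J.Nonempty) (π₁ π₂ : V → C) (cstar : C) (S : Finset V) : ℝ :=
  ∑ y ∈ E.powerset, sceneWeight E p y * mC J hJ π₁ π₂ cstar S y

lemma sceneWeight_nonneg {V : Type*} {E : Finset (V × V)} {p : V × V → ℝ}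
    (hp : ∀ e ∈ E, 0 ≤ p e ∧ p e ≤ 1) {y : Finset (V × V)} (hy : y ⊆ E) :
    0 ≤ sceneWeight E p y :=
  mul_nonneg (Finset.prod_nonneg fun e he => (hp e (hy he)).1)
    (Finset.prod_nonneg fun e he => sub_nonneg.2 (hp e (Finset.mem_sdiff.1 he).1).2)

lemma reachCount_mono {V : Type*} (y : Finset (V × V)) (S : Finset V) {A B : Finset V}
    (h : A ⊆ B) : reachCount y S A ≤ reachCount y S B :=
  Finset.card_le_card (Finset.filter_subset_filter _ h)

lemma reachCount_le_mC {V C : Type*} [Fintype V] (J : Finset C) (hJ : J.Nonempty)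
    (π₁ π₂ : V → C) (cstar : C) (S : Finset V) (y : Finset (V × V)) :
    (reachCount y S (secondFor π₂ cstar) : ℝ) ≤ mC J hJ π₁ π₂ cstar S y := by
  refine le_add_of_nonneg_right (Finset.le_inf' hJ _ fun c hc => ?_)
  have h := Finset.le_sup' (fun c' => ((firstFor π₁ c').card : ℝ)) hc
  have h0 : (0 : ℝ) ≤ reachCount y S (secondFor π₂ cstar ∩ firstFor π₁ c) := Nat.cast_nonneg _
  linarith

lemma mC_le_two_mul_reachCount {V C : Type*} [Fintype V] (J : Finset C) (hJ : J.Nonempty)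
    (π₁ π₂ : V → C) (cstar : C) (S : Finset V) (y : Finset (V × V)) :
    mC J hJ π₁ π₂ cstar S y ≤ 2 * (reachCount y S (secondFor π₂ cstar) : ℝ) := by
  obtain ⟨c, hc, hmax⟩ :=
    Finset.exists_mem_eq_sup' hJ (fun c' => ((firstFor π₁ c').card : ℝ))
  have h := Finset.inf'_le (fun c =>
      (reachCount y S (secondFor π₂ cstar ∩ firstFor π₁ c) : ℝ) +
        J.sup' hJ (fun c' => ((firstFor π₁ c').card : ℝ)) - ((firstFor π₁ c).card : ℝ)) hc
  have hle : (reachCount y S (secondFor π₂ cstar ∩ firstFor π₁ c) : ℝ) ≤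
      reachCount y S (secondFor π₂ cstar) :=
    Nat.cast_le.2 (reachCount_mono y S Finset.inter_subset_left)
  unfold mC
  linarith

/-- Theorem 5, constructive control with multiple candidates: if `S`
(of size at most `k`) is a `(1 − 1/e)`-approximate maximizer of the expected number of
influenced voters in `A = {v : π₂ v = c*}` among sets of size at most `k`, then
`MOV_C(S) ≥ (1/3)·(1 − 1/e)·MOV_C(S')` for every `S'` of size at most `k`. -/
theorem movC_multicandidate {V C : Type*} [Fintype V]
    (E : Finset (V × V)) (p : V × V → ℝ) (hp : ∀ e ∈ E, 0 ≤ p e ∧ p e ≤ 1)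
    (J : Finset C) (hJ : J.Nonempty) (π₁ π₂ : V → C) (cstar : C)
    (hdist : ∀ v, π₁ v ≠ π₂ v) (k : ℕ)
    (S : Finset V) (hS : S.card ≤ k)
    (hgreedy : ∀ S' : Finset V, S'.card ≤ k →
      (1 - 1 / Real.exp 1) *
          ∑ y ∈ E.powerset, sceneWeight E p y * (reachCount y S' (secondFor π₂ cstar) : ℝ) ≤
        ∑ y ∈ E.powerset, sceneWeight E p y * (reachCount y S (secondFor π₂ cstar) : ℝ)) :
    ∀ S' : Finset V, S'.card ≤ k →
      (1 / 3) * (1 - 1 / Real.exp 1) * MOVC E p J hJ π₁ π₂ cstar S' ≤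
        MOVC E p J hJ π₁ π₂ cstar S := by
  intro S' hS'
  have hw : ∀ y ∈ E.powerset, 0 ≤ sceneWeight E p y := fun y hy =>
    sceneWeight_nonneg hp (Finset.mem_powerset.1 hy)
  have hupper : MOVC E p J hJ π₁ π₂ cstar S' ≤
      2 * ∑ y ∈ E.powerset,
        sceneWeight E p y * (reachCount y S' (secondFor π₂ cstar) : ℝ) := by
    rw [MOVC, Finset.mul_sum]
    refine Finset.sum_le_sum fun y hy => ?_
    rw [mul_left_comm]
    exact mul_le_mul_of_nonneg_left (mC_le_two_mul_reachCount J hJ π₁ π₂ cstar S' y) (hw y hy)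
  have hlower : ∑ y ∈ E.powerset,
        sceneWeight E p y * (reachCount y S (secondFor π₂ cstar) : ℝ) ≤
      MOVC E p J hJ π₁ π₂ cstar S :=
    Finset.sum_le_sum fun y hy =>
      mul_le_mul_of_nonneg_left (reachCount_le_mC J hJ π₁ π₂ cstar S y) (hw y hy)
  have hF : 0 ≤ ∑ y ∈ E.powerset,
      sceneWeight E p y * (reachCount y S' (secondFor π₂ cstar) : ℝ) :=
    Finset.sum_nonneg fun y hy => mul_nonneg (hw y hy) (Nat.cast_nonneg _)
  have hα : 0 ≤ 1 - 1 / Real.exp 1 := by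
    rw [sub_nonneg, div_le_one (Real.exp_pos 1)]
    exact Real.one_le_exp zero_le_one
  have hg := hgreedy S' hS'
  have h1 := mul_le_mul_of_nonneg_left hupper hα
  have h2 := mul_nonneg hα hF
  linarith
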